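/- arXiv:1112.6129 — 2 statements merged into one kernel-verified Lean document; each statement's English description precedes it below -/
import Mathlib

section
/- In CC, for the Russell-style concept R satisfying (∀r)(r ∈ R ↔ □(r ∉ r)), the formula R ∈ R → □⊥ is derivable: assuming R ∈ R immediately yields □(R ∉ R) by the defining property of R, while R ∈ R also yields □(R ∈ R) by axiom (1), whence □⊥ by axioms (2) and (6). Formally, CC proves (∃x)[(∀r)(r ∈ x ↔ □(r ∉ r)) ∧ (x ∈ x → □⊥)]. -/
/-!
Deep embedding of Weaver's system CC ("Constructive Concepts").

The language is the first-order language of set theory (∈ and =, variables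
only as terms) augmented by a unary operator □.  Formulas use de Bruijn
indices for variables.  ⊥ is the defined formula (∀x,y)(x ∈ y) and ¬A
abbreviates A → ⊥.

CC consists of intuitionistic predicate calculus with equality (presented
in natural-deduction style, with contexts), the modal axiom schemes
(1) A → □A, (2) □(A∧B) ↔ (□A ∧ □B), (3) □(A∨B) ↔ (□A ∨ □B),
(4) □∃xA ↔ ∃x□A, (5) □∀xA ↔ ∀x□A, (6) □(A→B) → (□A → □B),
the deduction rule inferring A from □A (applicable to theorems, i.e. in
the empty context), the extensionality axiom (7), and the comprehension
scheme (8) (∃x)(∀r)(r ∈ x ↔ □A) with x not free in A.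
-/

namespace CC

/-- Formulas of CC; variables are de Bruijn indices. -/
inductive Fm : Type
  | mem : ℕ → ℕ → Fm        -- x ∈ y
  | eq  : ℕ → ℕ → Fm        -- x = y
  | and : Fm → Fm → Fm
  | or  : Fm → Fm → Fm
  | imp : Fm → Fm → Fm
  | all : Fm → Fm
  | ex  : Fm → Fm
  | box : Fm → Fm
  deriving DecidableEq

namespace Fm

/-- ⊥ stands for (∀x,y)(x ∈ y). -/
def bot : Fm := .all (.all (.mem 1 0))

/-- ¬A abbreviates A → ⊥. -/
def neg (A : Fm) : Fm := A.imp bot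

/-- A ↔ B abbreviates (A → B) ∧ (B → A). -/
def iff (A B : Fm) : Fm := (A.imp B).and (B.imp A)

/-- Lift a variable: indices ≥ d are incremented. -/
def liftVar (d n : ℕ) : ℕ := if n < d then n else n + 1

/-- Lift a formula at depth d: free indices ≥ d are incremented. -/
def liftAt (d : ℕ) : Fm → Fm
  | mem a b => mem (liftVar d a) (liftVar d b)
  | eq a b  => eq (liftVar d a) (liftVar d b)
  | and A B => and (A.liftAt d) (B.liftAt d)
  | or A B  => or (A.liftAt d) (B.liftAt d)
  | imp A B => imp (A.liftAt d) (B.liftAt d)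
  | all A   => all (A.liftAt (d+1))
  | ex A    => ex (A.liftAt (d+1))
  | box A   => box (A.liftAt d)

/-- Lift a formula (all free indices incremented). -/
def shift : Fm → Fm := liftAt 0

/-- Substitute variable t for index d (indices above d are lowered). -/
def substVar (d t n : ℕ) : ℕ := if n < d then n else if n = d then t else n - 1

/-- Substitute the variable t for the de Bruijn index d. -/
def subst (d t : ℕ) : Fm → Fm
  | mem a b => mem (substVar d t a) (substVar d t b)
  | eq a b  => eq (substVar d t a) (substVar d t b)
  | and A B => and (A.subst d t) (B.subst d t)
  | or A B  => or (A.subst d t) (B.subst d t)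
  | imp A B => imp (A.subst d t) (B.subst d t)
  | all A   => all (A.subst (d+1) (t+1))
  | ex A    => ex (A.subst (d+1) (t+1))
  | box A   => box (A.subst d t)

end Fm

/-- The extensionality axiom (7): x = y ↔ (∀u)(u ∈ x ↔ u ∈ y)
(universally closed). -/
def extAx : Fm :=
  .all (.all (Fm.iff (.eq 1 0) (.all (Fm.iff (.mem 0 2) (.mem 0 1)))))

/-- Derivability in CC, from a list of hypotheses.  The rules are those of
intuitionistic natural deduction with equality (with ex falso for the
defined ⊥), the modal axioms (1)–(6), the rule inferring A from □A (for
theorems, i.e. with no hypotheses), extensionality, and comprehension.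
In `compr`, the formula `A` has de Bruijn index 0 as the fixed variable r;
lifting at 1 guarantees that the comprehension variable x does not occur
freely in A. -/
inductive Prf : List Fm → Fm → Prop
  | hyp {Γ : List Fm} {A : Fm} : A ∈ Γ → Prf Γ A
  | andI {Γ : List Fm} {A B : Fm} : Prf Γ A → Prf Γ B → Prf Γ (.and A B)
  | andE1 {Γ : List Fm} {A B : Fm} : Prf Γ (.and A B) → Prf Γ A
  | andE2 {Γ : List Fm} {A B : Fm} : Prf Γ (.and A B) → Prf Γ B
  | orI1 {Γ : List Fm} {A B : Fm} : Prf Γ A → Prf Γ (.or A B)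
  | orI2 {Γ : List Fm} {A B : Fm} : Prf Γ B → Prf Γ (.or A B)
  | orE {Γ : List Fm} {A B C : Fm} : Prf Γ (.or A B) → Prf (A :: Γ) C → Prf (B :: Γ) C → Prf Γ C
  | impI {Γ : List Fm} {A B : Fm} : Prf (A :: Γ) B → Prf Γ (.imp A B)
  | impE {Γ : List Fm} {A B : Fm} : Prf Γ (.imp A B) → Prf Γ A → Prf Γ B
  | exfalso {Γ : List Fm} {A : Fm} : Prf Γ Fm.bot → Prf Γ A
  | allI {Γ : List Fm} {A : Fm} : Prf (Γ.map Fm.shift) A → Prf Γ (.all A)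
  | allE {Γ : List Fm} {A : Fm} (t : ℕ) : Prf Γ (.all A) → Prf Γ (A.subst 0 t)
  | exI {Γ : List Fm} {A : Fm} (t : ℕ) : Prf Γ (A.subst 0 t) → Prf Γ (.ex A)
  | exE {Γ : List Fm} {A B : Fm} : Prf Γ (.ex A) → Prf (A :: Γ.map Fm.shift) B.shift → Prf Γ B
  | refl {Γ : List Fm} (t : ℕ) : Prf Γ (.eq t t)
  | eqSubst {Γ : List Fm} {A : Fm} (s t : ℕ) :
      Prf Γ (.eq s t) → Prf Γ (A.subst 0 s) → Prf Γ (A.subst 0 t)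
  | ax1 {Γ : List Fm} {A : Fm} : Prf Γ (A.imp (.box A))
  | ax2 {Γ : List Fm} {A B : Fm} : Prf Γ (Fm.iff (.box (.and A B)) (.and (.box A) (.box B)))
  | ax3 {Γ : List Fm} {A B : Fm} : Prf Γ (Fm.iff (.box (.or A B)) (.or (.box A) (.box B)))
  | ax4 {Γ : List Fm} {A : Fm} : Prf Γ (Fm.iff (.box (.ex A)) (.ex (.box A)))
  | ax5 {Γ : List Fm} {A : Fm} : Prf Γ (Fm.iff (.box (.all A)) (.all (.box A)))
  | ax6 {Γ : List Fm} {A B : Fm} : Prf Γ ((Fm.box (A.imp B)).imp ((Fm.box A).imp (.box B)))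
  | boxE {A : Fm} : Prf [] (.box A) → Prf [] A
  | ext {Γ : List Fm} : Prf Γ extAx
  | compr {Γ : List Fm} (A : Fm) :
      Prf Γ (.ex (.all (Fm.iff (.mem 0 1) (.box (A.liftAt 1)))))

namespace Fm

theorem substVar_liftVar_succ (d n : ℕ) : substVar d d (liftVar (d + 1) n) = n := by
  grind [substVar, liftVar]

theorem subst_liftAt_succ (A : Fm) (d : ℕ) : (A.liftAt (d + 1)).subst d d = A := by
  induction A generalizing d <;> simp_all [liftAt, subst, substVar_liftVar_succ]

/-- The defining property `(∀r)(r ∈ x ↔ □A(r))` of the concept `x` that comprehension provides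
for `A`. Index 0 is `r` in `A` but `x` in the resulting formula, all other parameters keeping
their index, so the instance `A(x)` is again written `A`. -/
def isConceptOf (A : Fm) : Fm := .all (iff (.mem 0 1) (.box (A.liftAt 1)))

end Fm

namespace Prf

variable {Γ : List Fm} {A B : Fm}

theorem ex_mono (hA : Prf Γ (.ex A)) (hAB : Prf (A :: Γ.map Fm.shift) B) : Prf Γ (.ex B) :=
  .exE hA (.exI 0 ((B.subst_liftAt_succ 0).symm ▸ hAB))

theorem box_intro (hA : Prf Γ A) : Prf Γ (.box A) :=
  .impE .ax1 hA

theorem box_mp (hAB : Prf Γ (.box (A.imp B))) (hA : Prf Γ (.box A)) : Prf Γ (.box B) :=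
  .impE (.impE .ax6 hAB) hA

-- Curry's form of the paradox; Russell's is the case where `B` is `⊥`.
theorem box_of_imp_box_imp (h : Prf Γ (A.imp (.box (A.imp B)))) (hA : Prf Γ A) :
    Prf Γ (.box B) :=
  box_mp (.impE h hA) (box_intro hA)

theorem self_mem_iff_box (h : Prf Γ A.isConceptOf) : Prf Γ (Fm.iff (.mem 0 0) (.box A)) := by
  have hself : Prf Γ (Fm.iff (.mem 0 0) (.box ((A.liftAt 1).subst 0 0))) := .allE 0 h
  rwa [A.subst_liftAt_succ] at hself

end Prf

theorem russell_self_membership_weakly_false_general (Γ : List Fm) (B : Fm) :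
    Prf Γ (.ex (.and ((Fm.mem 0 0).imp B).isConceptOf ((Fm.mem 0 0).imp (.box B)))) := by
  refine .ex_mono (.compr ((Fm.mem 0 0).imp B)) (.andI (.hyp List.mem_cons_self) (.impI ?_))
  have hconcept : Prf (.mem 0 0 :: ((Fm.mem 0 0).imp B).isConceptOf :: Γ.map Fm.shift)
      ((Fm.mem 0 0).imp B).isConceptOf :=
    .hyp (List.mem_cons_of_mem _ List.mem_cons_self)
  exact .box_of_imp_box_imp hconcept.self_mem_iff_box.andE1 (.hyp List.mem_cons_self)

/-- CC proves, for the Russell-style concept R with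
(∀r)(r ∈ R ↔ □(r ∉ r)), the formula R ∈ R → □⊥.  Formally: CC proves
(∃x)[(∀r)(r ∈ x ↔ □(r ∉ r)) ∧ (x ∈ x → □⊥)].
(Here ¬A is A → ⊥ with ⊥ = (∀x,y)(x ∈ y), and r ∉ r is ¬(r ∈ r).) -/
theorem russell_self_membership_weakly_false :
    Prf [] (.ex (.and
      (.all (Fm.iff (.mem 0 1) (.box (Fm.neg (.mem 0 0)))))
      ((Fm.mem 0 0).imp (.box Fm.bot)))) :=
  russell_self_membership_weakly_false_general [] Fm.bot

end CC
end

section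
/- The formula (∀x,y)(Sx = Sy → □(x = y)) is provable in CC″. -/
/-!
Deep embedding of CC″: Weaver's system CC ("Constructive Concepts")
extended by definitions with a constant 0, a unary function symbol S and a
constant ω, satisfying
  r ∈ 0 ↔ □⊥,
  r ∈ Sx ↔ □(r = x),
  r ∈ ω ↔ □(∀z)[(0 ∈ z ∧ (∀x)(x ∈ z → Sx ∈ z)) → r ∈ z].

The language is the first-order language of set theory (∈ and =) with the
extra function symbols, augmented by a unary operator □.  Variables are de
Bruijn indices.  ⊥ is the defined formula (∀x,y)(x ∈ y) and ¬A abbreviates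
A → ⊥.  CC consists of intuitionistic predicate calculus with equality,
the modal axiom schemes (1)–(6), the deduction rule inferring A from □A
(for theorems), extensionality, and the comprehension scheme
(∃x)(∀r)(r ∈ x ↔ □A) with x not free in A.
-/

namespace CC2

/-- Terms of CC″: variables (de Bruijn indices), 0, S, ω. -/
inductive Tm : Type
  | var : ℕ → Tm
  | zero : Tm
  | succ : Tm → Tm
  | omega : Tm
  deriving DecidableEq

/-- Formulas of CC″. -/
inductive Fm : Type
  | mem : Tm → Tm → Fm      -- s ∈ t
  | eq  : Tm → Tm → Fm      -- s = t
  | and : Fm → Fm → Fm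
  | or  : Fm → Fm → Fm
  | imp : Fm → Fm → Fm
  | all : Fm → Fm
  | ex  : Fm → Fm
  | box : Fm → Fm
  deriving DecidableEq

namespace Tm

/-- Lift a term at depth d: free indices ≥ d are incremented. -/
def liftAt (d : ℕ) : Tm → Tm
  | var n => var (if n < d then n else n + 1)
  | zero => zero
  | succ t => succ (t.liftAt d)
  | omega => omega

/-- Substitute the term s for the de Bruijn index d. -/
def subst (d : ℕ) (s : Tm) : Tm → Tm
  | var n => if n < d then var n else if n = d then s else var (n - 1)
  | zero => zero
  | succ t => succ (subst d s t)
  | omega => omega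

end Tm

namespace Fm

/-- ⊥ stands for (∀x,y)(x ∈ y). -/
def bot : Fm := .all (.all (.mem (.var 1) (.var 0)))

/-- ¬A abbreviates A → ⊥. -/
def neg (A : Fm) : Fm := A.imp bot

/-- A ↔ B abbreviates (A → B) ∧ (B → A). -/
def iff (A B : Fm) : Fm := (A.imp B).and (B.imp A)

/-- Lift a formula at depth d: free indices ≥ d are incremented. -/
def liftAt (d : ℕ) : Fm → Fm
  | mem a b => mem (a.liftAt d) (b.liftAt d)
  | eq a b  => eq (a.liftAt d) (b.liftAt d)
  | and A B => and (A.liftAt d) (B.liftAt d)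
  | or A B  => or (A.liftAt d) (B.liftAt d)
  | imp A B => imp (A.liftAt d) (B.liftAt d)
  | all A   => all (A.liftAt (d+1))
  | ex A    => ex (A.liftAt (d+1))
  | box A   => box (A.liftAt d)

/-- Lift a formula (all free indices incremented). -/
def shift : Fm → Fm := liftAt 0

/-- Substitute the term s for the de Bruijn index d. -/
def subst (d : ℕ) (s : Tm) : Fm → Fm
  | mem a b => mem (Tm.subst d s a) (Tm.subst d s b)
  | eq a b  => eq (Tm.subst d s a) (Tm.subst d s b)
  | and A B => and (A.subst d s) (B.subst d s)
  | or A B  => or (A.subst d s) (B.subst d s)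
  | imp A B => imp (A.subst d s) (B.subst d s)
  | all A   => all (A.subst (d+1) (s.liftAt 0))
  | ex A    => ex (A.subst (d+1) (s.liftAt 0))
  | box A   => box (A.subst d s)

end Fm

/-- The extensionality axiom (7): x = y ↔ (∀u)(u ∈ x ↔ u ∈ y)
(universally closed). -/
def extAx : Fm :=
  .all (.all (Fm.iff (.eq (.var 1) (.var 0))
    (.all (Fm.iff (.mem (.var 0) (.var 2)) (.mem (.var 0) (.var 1))))))

/-- Defining axiom of 0:  (∀r)(r ∈ 0 ↔ □⊥). -/
def zeroAx : Fm := .all (Fm.iff (.mem (.var 0) .zero) (.box Fm.bot))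

/-- Defining axiom of S:  (∀r,x)(r ∈ Sx ↔ □(r = x)). -/
def succAx : Fm :=
  .all (.all (Fm.iff (.mem (.var 1) (.succ (.var 0)))
    (.box (.eq (.var 1) (.var 0)))))

/-- Defining axiom of ω:
(∀r)(r ∈ ω ↔ □(∀z)[(0 ∈ z ∧ (∀x)(x ∈ z → Sx ∈ z)) → r ∈ z]). -/
def omegaAx : Fm :=
  .all (Fm.iff (.mem (.var 0) .omega)
    (.box (.all (.imp
      (.and (.mem .zero (.var 0))
        (.all (.imp (.mem (.var 0) (.var 1))
          (.mem (.succ (.var 0)) (.var 1)))))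
      (.mem (.var 1) (.var 0))))))

/-- Derivability in CC″ from a list of hypotheses: intuitionistic natural
deduction with equality (with ex falso for the defined ⊥), the modal axioms
(1)–(6), the rule inferring A from □A (for theorems), extensionality, the
comprehension scheme, and the defining axioms of 0, S, ω.  In `compr` the
formula A has de Bruijn index 0 as the fixed variable r; lifting at 1
guarantees that the comprehension variable x does not occur freely in A. -/
inductive Prf : List Fm → Fm → Prop
  | hyp {Γ : List Fm} {A : Fm} : A ∈ Γ → Prf Γ A
  | andI {Γ : List Fm} {A B : Fm} : Prf Γ A → Prf Γ B → Prf Γ (.and A B)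
  | andE1 {Γ : List Fm} {A B : Fm} : Prf Γ (.and A B) → Prf Γ A
  | andE2 {Γ : List Fm} {A B : Fm} : Prf Γ (.and A B) → Prf Γ B
  | orI1 {Γ : List Fm} {A B : Fm} : Prf Γ A → Prf Γ (.or A B)
  | orI2 {Γ : List Fm} {A B : Fm} : Prf Γ B → Prf Γ (.or A B)
  | orE {Γ : List Fm} {A B C : Fm} :
      Prf Γ (.or A B) → Prf (A :: Γ) C → Prf (B :: Γ) C → Prf Γ C
  | impI {Γ : List Fm} {A B : Fm} : Prf (A :: Γ) B → Prf Γ (.imp A B)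
  | impE {Γ : List Fm} {A B : Fm} : Prf Γ (.imp A B) → Prf Γ A → Prf Γ B
  | exfalso {Γ : List Fm} {A : Fm} : Prf Γ Fm.bot → Prf Γ A
  | allI {Γ : List Fm} {A : Fm} : Prf (Γ.map Fm.shift) A → Prf Γ (.all A)
  | allE {Γ : List Fm} {A : Fm} (t : Tm) : Prf Γ (.all A) → Prf Γ (A.subst 0 t)
  | exI {Γ : List Fm} {A : Fm} (t : Tm) : Prf Γ (A.subst 0 t) → Prf Γ (.ex A)
  | exE {Γ : List Fm} {A B : Fm} :
      Prf Γ (.ex A) → Prf (A :: Γ.map Fm.shift) B.shift → Prf Γ B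
  | refl {Γ : List Fm} (t : Tm) : Prf Γ (.eq t t)
  | eqSubst {Γ : List Fm} {A : Fm} (s t : Tm) :
      Prf Γ (.eq s t) → Prf Γ (A.subst 0 s) → Prf Γ (A.subst 0 t)
  | ax1 {Γ : List Fm} {A : Fm} : Prf Γ (A.imp (.box A))
  | ax2 {Γ : List Fm} {A B : Fm} :
      Prf Γ (Fm.iff (.box (.and A B)) (.and (.box A) (.box B)))
  | ax3 {Γ : List Fm} {A B : Fm} :
      Prf Γ (Fm.iff (.box (.or A B)) (.or (.box A) (.box B)))
  | ax4 {Γ : List Fm} {A : Fm} : Prf Γ (Fm.iff (.box (.ex A)) (.ex (.box A)))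
  | ax5 {Γ : List Fm} {A : Fm} : Prf Γ (Fm.iff (.box (.all A)) (.all (.box A)))
  | ax6 {Γ : List Fm} {A B : Fm} :
      Prf Γ ((Fm.box (A.imp B)).imp ((Fm.box A).imp (.box B)))
  | boxE {A : Fm} : Prf [] (.box A) → Prf [] A
  | ext {Γ : List Fm} : Prf Γ extAx
  | compr {Γ : List Fm} (A : Fm) :
      Prf Γ (.ex (.all (Fm.iff (.mem (.var 0) (.var 1)) (.box (A.liftAt 1)))))
  | ax0 {Γ : List Fm} : Prf Γ zeroAx
  | axS {Γ : List Fm} : Prf Γ succAx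
  | axW {Γ : List Fm} : Prf Γ omegaAx

end CC2

namespace CC2

theorem Tm.subst_liftAt (d : ℕ) (s t : Tm) : Tm.subst d s (t.liftAt d) = t := by
  induction t with
  | var n => grind [Tm.liftAt, Tm.subst]
  | zero | omega => rfl
  | succ t ih => simp only [Tm.liftAt, Tm.subst, ih]

namespace Prf

variable {Γ : List Fm} {r s t : Tm}

theorem boxI {A : Fm} (h : Prf Γ A) : Prf Γ (.box A) :=
  ax1.impE h

theorem mem_of_mem_of_eq (hr : Prf Γ (.mem r s)) (h : Prf Γ (.eq s t)) : Prf Γ (.mem r t) := by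
  have subst_eq (u : Tm) : (Fm.mem (r.liftAt 0) (.var 0)).subst 0 u = .mem r u :=
    congrArg (Fm.mem · u) (Tm.subst_liftAt 0 u r)
  rw [← subst_eq] at hr ⊢
  exact eqSubst s t h hr

theorem mem_succ_iff (Γ : List Fm) (s t : Tm) :
    Prf Γ (Fm.iff (.mem s (.succ t)) (.box (.eq s t))) := by
  have h : Prf Γ (Fm.iff (.mem (Tm.subst 0 t (s.liftAt 0)) (.succ t))
      (.box (.eq (Tm.subst 0 t (s.liftAt 0)) t))) :=
    (axS.allE s).allE t
  rwa [Tm.subst_liftAt] at h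

theorem mem_succ_self (Γ : List Fm) (t : Tm) : Prf Γ (.mem t (.succ t)) :=
  (mem_succ_iff Γ t t).andE2.impE (refl t).boxI

theorem box_eq_of_succ_eq_succ (h : Prf Γ (.eq (.succ s) (.succ t))) : Prf Γ (.box (.eq s t)) :=
  have s_mem_succ_t : Prf Γ (.mem s (.succ t)) := mem_of_mem_of_eq (mem_succ_self Γ s) h
  (mem_succ_iff Γ s t).andE1.impE s_mem_succ_t

end Prf

/-- The formula (∀x,y)(Sx = Sy → □(x = y)) is provable
in CC″. -/
theorem succ_injective :
    Prf [] (.all (.all (.imp (.eq (.succ (.var 1)) (.succ (.var 0)))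
      (.box (.eq (.var 1) (.var 0)))))) := by
  refine Prf.allI (Prf.allI (Prf.impI ?_))
  exact Prf.box_eq_of_succ_eq_succ (Prf.hyp List.mem_cons_self)

end CC2
end
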